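/- Let p be an odd prime, k a field of characteristic p, a an integer with (ℤ/pℤ)^× = ⟨ā⟩, and d a positive divisor of p−1 with p−1 = de. Let σ, τ be k-automorphisms of k(x₀,…,x_{p-1}) given by σ: x_i ↦ x_{i+1} and τ: x_i ↦ x_{ai} (indices mod p), and G_{pd} := ⟨σ, τ^e⟩. Then the fixed field k(x₀,…,x_{p-1})^{G_{pd}} is purely transcendental over k. -/

import Mathlib

set_option maxHeartbeats 1000000
set_option synthInstance.maxHeartbeats 400000

/-- A field extension `F` of `k` is `k`-rational (purely transcendental over `k`)
if it is `k`-isomorphic to a rational function field in finitely many variables. -/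
def IsKRational (k F : Type*) [Field k] [Field F] [Algebra k F] : Prop :=
  ∃ n : ℕ, Nonempty (F ≃ₐ[k] FractionRing (MvPolynomial (Fin n) k))

/-!
Regard `x` as a distribution of masses on the affine line over the finite field `F` of order `q`.
An automorphism acting through `i ↦ b * i + c` sends the barycenter `u` to `b⁻¹ * (u - c)`, hence
scales `v = u ^ q - u` by `b⁻¹` and the `j`-th central moment by `b⁻¹ ^ j`. Therefore `v ^ d` and
the quotients of the `j`-th central moment by `v ^ j` are invariant under all maps with `b ^ d = 1`;
as the first central moment vanishes, these are exactly `q` elements. They generate the fixed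
field. Indeed, let `L` be the field they generate. The moments recover the masses, because
`1 - (j - i) ^ (q - 1)` is the indicator of `j = i`, so adjoining `u` to `L` gives everything; and
`u` is a root of `(X ^ q - X) ^ d - v ^ d`, so this extension has degree at most `d * q`, the order
of the group. Comparing transcendence degrees, the `q` generators are algebraically independent.
-/

open IntermediateField Polynomial Set
open Module (finrank)

section OrderOfAction

variable {M N α ι : Type*} [Monoid M] [MulAction M α] [Monoid N] [MulAction N ι]
  {m : M} {n : N} {x : ι → α}

theorem pow_smul_apply_eq (h : ∀ i, m • x i = x (n • i)) (r : ℕ) (i : ι) :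
    m ^ r • x i = x (n ^ r • i) := by
  induction r generalizing i with
  | zero => simp only [pow_zero, one_smul]
  | succ r ih => rw [pow_succ, mul_smul, h, ih, pow_succ, mul_smul]

theorem orderOf_dvd_orderOf_of_smul_apply_eq [FaithfulSMul N ι] (hx : Function.Injective x)
    (h : ∀ i, m • x i = x (n • i)) : orderOf n ∣ orderOf m := by
  refine orderOf_dvd_of_pow_eq_one (eq_of_smul_eq_smul fun i ↦ hx ?_)
  rw [← pow_smul_apply_eq h, pow_orderOf_eq_one, one_smul, one_smul]

end OrderOfAction

section FixedField

variable {k K : Type*} [Field k] [Field K] [Algebra k K]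

theorem finite_of_le_fixedField {L : IntermediateField k K} [FiniteDimensional L K]
    {H : Subgroup Gal(K/k)} (hLH : L ≤ fixedField H) : Finite H :=
  have : Finite L.fixingSubgroup := .of_equiv _ L.fixingSubgroupEquiv.symm.toEquiv
  .of_injective _ (Subgroup.inclusion_injective ((le_iff_le _ _).1 hLH))

theorem eq_fixedField_of_finrank_le_natCard {L : IntermediateField k K} [FiniteDimensional L K]
    {H : Subgroup Gal(K/k)} (hLH : L ≤ fixedField H) (hcard : finrank L K ≤ Nat.card H) :
    L = fixedField H := by
  have := finite_of_le_fixedField hLH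
  have := Fintype.ofFinite H
  have hH : finrank (fixedField H) K = Nat.card H :=
    (FixedPoints.finrank_eq_card H K).trans Nat.card_eq_fintype_card.symm
  exact eq_of_le_of_finrank_le' hLH (hcard.trans_eq hH.symm)

theorem finiteDimensional_and_finrank_le_of_adjoin_eq_top {P : k[X]} {u : K} (hP : P ≠ 0)
    (hPu : aeval u P = 0) (hu : k⟮u⟯ = ⊤) :
    FiniteDimensional k K ∧ finrank k K ≤ P.natDegree := by
  have hint : IsIntegral k u := isAlgebraic_iff_isIntegral.1 ⟨P, hP, hPu⟩
  have hfin : FiniteDimensional k (⊤ : IntermediateField k K) :=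
    hu ▸ adjoin.finiteDimensional hint
  refine ⟨Module.Finite.equiv topEquiv.toLinearEquiv, ?_⟩
  rw [← finrank_top', ← hu, adjoin.finrank hint]
  exact natDegree_le_of_dvd (minpoly.dvd k u hPu) hP

theorem finiteDimensional_and_finrank_le_of_pow_sub_self_pow_mem {n d : ℕ} (hn : 1 < n)
    (hd : d ≠ 0) {u : K} {a : k} (ha : (u ^ n - u) ^ d = algebraMap k K a) (hu : k⟮u⟯ = ⊤) :
    FiniteDimensional k K ∧ finrank k K ≤ d * n := by
  have hdeg : ((X ^ n - X : k[X]) ^ d - C a).natDegree = d * n := by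
    rw [natDegree_sub_C, natDegree_pow, FiniteField.X_pow_card_sub_X_natDegree_eq k hn]
  rw [← hdeg]
  refine finiteDimensional_and_finrank_le_of_adjoin_eq_top ?_ (by simp [ha]) hu
  exact ne_zero_of_natDegree_gt (n := 0) (hdeg ▸ by positivity)

end FixedField

section Transcendence

variable {k K ι : Type*} [Field k] [Field K] [Algebra k K]

theorem algebraicIndependent_of_isAlgebraic_adjoin [Finite ι] {x f : ι → K}
    (hx : AlgebraicIndependent k x) [hf : Algebra.IsAlgebraic (adjoin k (range f)) K] :
    AlgebraicIndependent k f :=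
  have : Algebra.IsAlgebraic (Algebra.adjoin k (range f)) K :=
    ⟨fun y ↦ isAlgebraic_adjoin_iff.1 (hf.isAlgebraic y)⟩
  (Algebra.IsAlgebraic.isTranscendenceBasis_of_lift_le_trdeg_of_finite k f
    hx.lift_cardinalMk_le_trdeg).1

theorem isKRational_adjoin_range {n : ℕ} {f : Fin n → K} (hf : AlgebraicIndependent k f) :
    IsKRational k (adjoin k (range f)) :=
  ⟨n, ⟨hf.aevalEquivField.symm⟩⟩

variable (k ι)

theorem algebraicIndependent_algebraMap_X :
    AlgebraicIndependent k fun i : ι ↦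
      algebraMap (MvPolynomial ι k) (FractionRing (MvPolynomial ι k)) (.X i) :=
  (MvPolynomial.algebraicIndependent_X ι k).map'
    (f := IsScalarTower.toAlgHom k (MvPolynomial ι k) (FractionRing (MvPolynomial ι k)))
    (IsFractionRing.injective _ _)

theorem adjoin_range_algebraMap_X_eq_top :
    adjoin k (range fun i : ι ↦
      algebraMap (MvPolynomial ι k) (FractionRing (MvPolynomial ι k)) (.X i)) = ⊤ := by
  refine (IsFractionRing.algHom_fieldRange_eq_of_comp_eq_of_range_eq (A := MvPolynomial ι k)
    (g := IsScalarTower.toAlgHom k _ _) (f := AlgHom.id k (FractionRing (MvPolynomial ι k)))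
    rfl ?_).symm.trans (AlgHom.fieldRange_eq_top.2 Function.surjective_id)
  rw [range_comp' (algebraMap _ _), ← IsScalarTower.coe_toAlgHom' k, ← AlgHom.map_adjoin,
    MvPolynomial.adjoin_range_X, Algebra.map_top]

end Transcendence

theorem sum_ne_zero_of_linearIndependent {ι R M : Type*} [Fintype ι] [Nonempty ι] [Ring R]
    [Nontrivial R] [AddCommGroup M] [Module R M] {x : ι → M} (hx : LinearIndependent R x) :
    ∑ i, x i ≠ 0 := by
  intro h
  have hone : ∑ i, (1 : R) • x i = 0 := by simpa only [one_smul] using h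
  exact one_ne_zero (Fintype.linearIndependent_iff.1 hx _ hone (Classical.arbitrary ι))

section Moments

variable {F R : Type*} [Field F] [Fintype F] [CommRing R] [Algebra F R]

/-- The `j`-th power moment, about the point `t`, of the distribution on the affine line `F`
with mass `x i` at the point `i`. -/
def momentAbout (x : F → R) (t : R) (j : ℕ) : R :=
  ∑ i, (algebraMap F R i - t) ^ j * x i

variable {x : F → R}

theorem momentAbout_zero (x : F → R) (t : R) : momentAbout x t 0 = ∑ i, x i := by
  simp only [momentAbout, pow_zero, one_mul]

theorem momentAbout_eq_sum_momentAbout (x : F → R) (t u : R) (n : ℕ) :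
    momentAbout x t n =
      ∑ l ∈ Finset.range (n + 1), (u - t) ^ (n - l) * n.choose l * momentAbout x u l := by
  simp only [momentAbout, Finset.mul_sum]
  rw [Finset.sum_comm]
  refine Finset.sum_congr rfl fun i _ ↦ ?_
  rw [← sub_add_sub_cancel _ u t, add_pow, Finset.sum_mul]
  exact Finset.sum_congr rfl fun l _ ↦ by ring

theorem momentAbout_algebraMap_card_sub_one (x : F → R) (i : F) :
    momentAbout x (algebraMap F R i) (Fintype.card F - 1) = (∑ j, x j) - x i := by
  classical
  have hpow (j : F) : (j - i) ^ (Fintype.card F - 1) = if j = i then 0 else 1 := by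
    split_ifs with hji
    · rw [hji, sub_self, zero_pow (Nat.sub_ne_zero_of_lt Fintype.one_lt_card)]
    · exact FiniteField.pow_card_sub_one_eq_one _ (sub_ne_zero.2 hji)
  simp only [momentAbout, ← map_sub, ← map_pow, hpow]
  rw [← Finset.sum_erase_eq_sub (Finset.mem_univ i), ← Finset.filter_ne', Finset.sum_filter]
  exact Finset.sum_congr rfl fun j _ ↦ by split_ifs <;> simp_all

theorem mem_of_momentAbout_mem {S : Subalgebra F R} {u : R} (hu : u ∈ S)
    (hS : ∀ j < Fintype.card F, momentAbout x u j ∈ S) (i : F) : x i ∈ S := by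
  have hmass : ∑ j, x j ∈ S := momentAbout_zero x u ▸ hS 0 Fintype.card_pos
  have hxi : x i = (∑ j, x j) - momentAbout x (algebraMap F R i) (Fintype.card F - 1) := by
    rw [momentAbout_algebraMap_card_sub_one, sub_sub_cancel]
  rw [hxi, momentAbout_eq_sum_momentAbout x _ u]
  refine sub_mem hmass (sum_mem fun l hl ↦ mul_mem (mul_mem ?_ (natCast_mem S _)) (hS l ?_))
  · exact pow_mem (sub_mem hu (S.algebraMap_mem i)) _
  · have := Finset.mem_range.1 hl
    have := Fintype.card_pos (α := F)
    omega

theorem momentAbout_algebraMap_ne_zero (hx : LinearIndependent F x) (a : F) (j : ℕ) :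
    momentAbout x (algebraMap F R a) j ≠ 0 := by
  intro h
  have hsum : ∑ i, (i - a) ^ j • x i = 0 := by
    simpa only [momentAbout, Algebra.smul_def, map_pow, map_sub] using h
  simpa using Fintype.linearIndependent_iff.1 hx _ hsum (a + 1)

theorem map_momentAbout {φ : R →ₐ[F] R} {b : Fˣ} {c : F} (hφ : ∀ i, φ (x i) = x (b * i + c))
    (t : R) (j : ℕ) :
    algebraMap F R b ^ j * φ (momentAbout x t j) =
      momentAbout x (algebraMap F R b * φ t + algebraMap F R c) j := by
  simp only [momentAbout]
  rw [map_sum, Finset.mul_sum]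
  refine Fintype.sum_equiv ((Units.mulLeft b).trans (Equiv.addRight c)) _ _ fun i ↦ ?_
  simp only [map_mul, map_pow, map_sub, AlgHom.commutes, hφ, Equiv.trans_apply,
    Units.mulLeft_apply, Equiv.coe_addRight, map_add]
  rw [← mul_assoc, ← mul_pow]
  ring

end Moments

section CentralMoments

variable {F K : Type*} [Field F] [Fintype F] [Field K] [Algebra F K]

/-- The barycenter of the distribution on the affine line `F` with mass `x i` at the point `i`,
or `0` if the total mass vanishes. -/
noncomputable def barycenter (x : F → K) : K :=
  (∑ i, algebraMap F K i * x i) / ∑ i, x i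

/-- The `j`-th moment about the barycenter. -/
noncomputable def centralMoment (x : F → K) (j : ℕ) : K :=
  momentAbout x (barycenter x) j

/-- The Artin–Schreier element `u ^ q - u`, for `u` the barycenter and `q` the order of `F`:
translations of `F` fix it, and homotheties scale it. -/
noncomputable def artinSchreierBarycenter (x : F → K) : K :=
  barycenter x ^ Fintype.card F - barycenter x

variable {x : F → K}

theorem momentAbout_one_eq_zero_iff (hx : ∑ i, x i ≠ 0) {t : K} :
    momentAbout x t 1 = 0 ↔ t = barycenter x := by
  simp only [momentAbout, pow_one, sub_mul, Finset.sum_sub_distrib, ← Finset.mul_sum]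
  rw [barycenter, eq_div_iff hx, sub_eq_zero, eq_comm]

theorem centralMoment_one (hx : ∑ i, x i ≠ 0) : centralMoment x 1 = 0 :=
  (momentAbout_one_eq_zero_iff hx).2 rfl

theorem mem_range_algebraMap_of_pow_card_eq {u : K} (hu : u ^ Fintype.card F = u) :
    u ∈ (algebraMap F K).range := by
  have hsplits : (X ^ Fintype.card F - X : F[X]).Splits := by
    rw [splits_iff_card_roots, FiniteField.roots_X_pow_card_sub_X,
      FiniteField.X_pow_card_sub_X_natDegree_eq F Fintype.one_lt_card]
    rfl
  refine hsplits.mem_range_of_isRoot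
    (FiniteField.X_pow_card_sub_X_ne_zero F Fintype.one_lt_card) ?_
  simp [hu]

theorem artinSchreierBarycenter_ne_zero (hx : LinearIndependent F x) :
    artinSchreierBarycenter x ≠ 0 := by
  intro h
  obtain ⟨a, ha⟩ := mem_range_algebraMap_of_pow_card_eq (F := F) (sub_eq_zero.1 h)
  refine momentAbout_algebraMap_ne_zero hx a 1 ?_
  exact (momentAbout_one_eq_zero_iff (sum_ne_zero_of_linearIndependent hx)).2 ha

section Affine

variable {φ : K →ₐ[F] K} {b : Fˣ} {c : F}

theorem map_barycenter (hx : ∑ i, x i ≠ 0) (hφ : ∀ i, φ (x i) = x (b * i + c)) :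
    algebraMap F K b * φ (barycenter x) + algebraMap F K c = barycenter x := by
  rw [← momentAbout_one_eq_zero_iff hx, ← map_momentAbout hφ,
    (momentAbout_one_eq_zero_iff hx).2 rfl, map_zero, mul_zero]

theorem map_centralMoment (hx : ∑ i, x i ≠ 0) (hφ : ∀ i, φ (x i) = x (b * i + c)) (j : ℕ) :
    algebraMap F K b ^ j * φ (centralMoment x j) = centralMoment x j := by
  rw [centralMoment, map_momentAbout hφ, map_barycenter hx hφ]

theorem map_artinSchreierBarycenter (hx : ∑ i, x i ≠ 0) (hφ : ∀ i, φ (x i) = x (b * i + c)) :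
    algebraMap F K b * φ (artinSchreierBarycenter x) = artinSchreierBarycenter x := by
  have hfrob := congrArg (FiniteField.frobeniusAlgHom F K) (map_barycenter hx hφ)
  simp only [map_add, map_mul, AlgHom.commutes, FiniteField.coe_frobeniusAlgHom] at hfrob
  simp only [artinSchreierBarycenter, map_sub, map_pow]
  linear_combination hfrob - map_barycenter hx hφ

end Affine

/-- The generators of the fixed field of the maps `i ↦ b * i + c` with `b ^ d = 1`: the central
moments, scaled to be invariant. The first central moment vanishes, and its slot is taken by
the `d`-th power of the scaling factor. -/
noncomputable def affineInvariant (x : F → K) (d : ℕ) (j : Fin (Fintype.card F)) : K :=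
  if (j : ℕ) = 1 then artinSchreierBarycenter x ^ d
  else centralMoment x j / artinSchreierBarycenter x ^ (j : ℕ)

variable {d : ℕ}

theorem map_affineInvariant {φ : K →ₐ[F] K} {b : Fˣ} {c : F} (hx : ∑ i, x i ≠ 0)
    (hφ : ∀ i, φ (x i) = x (b * i + c)) (hb : b ^ d = 1) (j : Fin (Fintype.card F)) :
    φ (affineInvariant x d j) = affineInvariant x d j := by
  have hv := map_artinSchreierBarycenter hx hφ
  have hb₀ : algebraMap F K b ≠ 0 := by simp
  have hbd : algebraMap F K b ^ d = 1 := by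
    rw [← map_pow, ← Units.val_pow_eq_pow_val, hb, Units.val_one, map_one]
  unfold affineInvariant
  split_ifs
  · nth_rw 2 [← hv]
    rw [map_pow, mul_pow, hbd, one_mul]
  · nth_rw 2 [← hv, ← map_centralMoment hx hφ j]
    rw [map_div₀, map_pow, mul_pow, mul_div_mul_left _ _ (pow_ne_zero _ hb₀)]

theorem artinSchreierBarycenter_pow_mem_range_affineInvariant :
    artinSchreierBarycenter x ^ d ∈ range (affineInvariant x d) :=
  ⟨⟨1, Fintype.one_lt_card⟩, if_pos rfl⟩

theorem centralMoment_mem_of_affineInvariant_mem (hx : LinearIndependent F x) {E : Subfield K}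
    (hu : barycenter x ∈ E) (hE : ∀ j, affineInvariant x d j ∈ E) {j : ℕ}
    (hj : j < Fintype.card F) : centralMoment x j ∈ E := by
  rcases eq_or_ne j 1 with rfl | hj₁
  · exact centralMoment_one (sum_ne_zero_of_linearIndependent hx) ▸ zero_mem E
  · have hv : artinSchreierBarycenter x ^ j ∈ E := pow_mem (sub_mem (pow_mem hu _) hu) j
    have hdiv : centralMoment x j / artinSchreierBarycenter x ^ j ∈ E := by
      simpa only [affineInvariant, if_neg hj₁] using hE ⟨j, hj⟩
    simpa only [div_mul_cancel₀ _ (pow_ne_zero j (artinSchreierBarycenter_ne_zero hx))]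
      using mul_mem hdiv hv

end CentralMoments

section AffineGroup

variable {F k K : Type*} [Field F] [Field k] [Field K] [Algebra k K]

variable (k) in
/-- The group of `k`-automorphisms acting on the family `x` through the affine maps
`i ↦ b * i + c` of `F` with `b ^ d = 1`. -/
def affineGroup (x : F → K) (d : ℕ) : Subgroup Gal(K/k) where
  carrier := {g | ∃ b : Fˣ, b ^ d = 1 ∧ ∃ c : F, ∀ i, g (x i) = x (b * i + c)}
  one_mem' := ⟨1, one_pow d, 0, fun i ↦ by simp⟩
  mul_mem' := by
    rintro g g' ⟨b, hb, c, hg⟩ ⟨b', hb', c', hg'⟩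
    refine ⟨b * b', by rw [mul_pow, hb, hb', one_mul], b * c' + c, fun i ↦ ?_⟩
    rw [AlgEquiv.mul_apply, hg', hg, Units.val_mul]
    ring_nf
  inv_mem' := by
    rintro g ⟨b, hb, c, hg⟩
    refine ⟨b⁻¹, by rw [inv_pow, hb, inv_one], -(b⁻¹ * c), fun i ↦ ?_⟩
    rw [AlgEquiv.aut_inv, AlgEquiv.symm_apply_eq, hg, mul_add, mul_neg, b.mul_inv_cancel_left,
      b.mul_inv_cancel_left, neg_add_cancel_right]

variable {x : F → K}

theorem closure_pair_le_affineGroup {σ τ : Gal(K/k)} {b : Fˣ}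
    (hσ : ∀ i, σ (x i) = x (i + 1)) (hτ : ∀ i, τ (x i) = x (b * i)) :
    Subgroup.closure {σ, τ} ≤ affineGroup k x (orderOf b) := by
  rw [Subgroup.closure_le, pair_subset_iff]
  exact ⟨⟨1, one_pow _, 1, by simpa using hσ⟩, ⟨b, pow_orderOf_eq_one b, 0, by simpa using hτ⟩⟩

variable [Fintype F] [Algebra F k] [Algebra F K] [IsScalarTower F k K] {d : ℕ}

theorem adjoin_affineInvariant_le_fixedField_affineGroup (hx : ∑ i, x i ≠ 0) :
    adjoin k (range (affineInvariant x d)) ≤ fixedField (affineGroup k x d) := by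
  rw [adjoin_le_iff]
  rintro _ ⟨j, rfl⟩
  rw [SetLike.mem_coe, mem_fixedField_iff]
  rintro g ⟨b, hb, c, hg⟩
  exact map_affineInvariant (φ := (g : K →ₐ[k] K).restrictScalars F) hx hg hb j

theorem adjoin_adjoin_affineInvariant_barycenter_eq_top (hx : LinearIndependent F x)
    (hx_top : adjoin k (range x) = ⊤) :
    (adjoin k (range (affineInvariant x d)))⟮barycenter x⟯ = ⊤ := by
  rw [← restrictScalars_eq_top_iff (K := k), adjoin_adjoin_left, eq_top_iff, ← hx_top,
    adjoin_le_iff]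
  set E := adjoin k (range (affineInvariant x d) ∪ {barycenter x})
  have hu : barycenter x ∈ E := subset_adjoin _ _ (.inr rfl)
  have hE (j) : affineInvariant x d j ∈ E := subset_adjoin _ _ (.inl ⟨j, rfl⟩)
  rintro _ ⟨i, rfl⟩
  exact mem_of_momentAbout_mem (S := E.toSubalgebra.restrictScalars F) hu
    (fun j hj ↦ centralMoment_mem_of_affineInvariant_mem hx (E := E.toSubfield) hu hE hj) i

theorem isKRational_fixedField_of_le_affineGroup (hx : AlgebraicIndependent k x)
    (hx_top : adjoin k (range x) = ⊤) (hd : d ≠ 0) {H : Subgroup Gal(K/k)}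
    (hH : H ≤ affineGroup k x d) (hcard : d * Fintype.card F ∣ Nat.card H) :
    IsKRational k (fixedField H) := by
  have hlin : LinearIndependent F x := hx.linearIndependent.restrict_scalars' F
  set L := adjoin k (range (affineInvariant x d))
  have hLH : L ≤ fixedField H :=
    (adjoin_affineInvariant_le_fixedField_affineGroup
      (sum_ne_zero_of_linearIndependent hlin)).trans (fixedField_le hH)
  have hv : artinSchreierBarycenter x ^ d ∈ L :=
    subset_adjoin k _ artinSchreierBarycenter_pow_mem_range_affineInvariant
  obtain ⟨hfin, hrank⟩ := finiteDimensional_and_finrank_le_of_pow_sub_self_pow_mem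
    (Fintype.one_lt_card (α := F)) hd (a := (⟨_, hv⟩ : L)) rfl
    (adjoin_adjoin_affineInvariant_barycenter_eq_top hlin hx_top)
  have := finite_of_le_fixedField hLH
  have hLH_eq : L = fixedField H :=
    eq_fixedField_of_finrank_le_natCard hLH (hrank.trans (Nat.le_of_dvd Nat.card_pos hcard))
  have hind : AlgebraicIndependent k (affineInvariant x d) :=
    algebraicIndependent_of_isAlgebraic_adjoin
      (hx.comp (Fintype.equivFin F).symm (Fintype.equivFin F).symm.injective)
  exact hLH_eq ▸ isKRational_adjoin_range hind

end AffineGroup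

section PrimeField

variable {k K : Type*} [Field k] [Field K] [Algebra k K] {p : ℕ} [Fact p.Prime]
  {x : ZMod p → K} {σ τ : Gal(K/k)} {b : (ZMod p)ˣ}

theorem orderOf_mul_prime_dvd_natCard_closure_pair (hx : Function.Injective x)
    (hσ : ∀ i, σ (x i) = x (i + 1)) (hτ : ∀ i, τ (x i) = x (b * i)) :
    orderOf b * p ∣ Nat.card (Subgroup.closure {σ, τ}) := by
  have hcoprime : (orderOf b).Coprime p :=
    .coprime_dvd_left (ZMod.orderOf_units_dvd_card_sub_one b)
      ((Nat.coprime_self_sub_left (Fact.out : p.Prime).one_le).2 (Nat.coprime_one_left p))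
  have hσ_order : p ∣ orderOf σ := by
    have : FaithfulSMul (Multiplicative (ZMod p)) (ZMod p) :=
      ⟨fun h ↦ add_right_cancel (G := ZMod p) (h 0)⟩
    have hdvd := orderOf_dvd_orderOf_of_smul_apply_eq (m := σ)
      (n := Multiplicative.ofAdd (1 : ZMod p)) hx fun i ↦ (hσ i).trans (congrArg x (add_comm i 1))
    rwa [orderOf_ofAdd_eq_addOrderOf, ZMod.addOrderOf_one] at hdvd
  have hτ_order : orderOf b ∣ orderOf τ := orderOf_dvd_orderOf_of_smul_apply_eq hx hτ
  refine hcoprime.mul_dvd_of_dvd_of_dvd (hτ_order.trans ?_) (hσ_order.trans ?_)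
  · exact Subgroup.orderOf_dvd_natCard _ (Subgroup.subset_closure (.inr rfl))
  · exact Subgroup.orderOf_dvd_natCard _ (Subgroup.subset_closure (.inl rfl))

theorem stmt13_general [CharP k p] (hx : AlgebraicIndependent k x)
    (hx_top : adjoin k (range x) = ⊤) (hσ : ∀ i, σ (x i) = x (i + 1))
    (hτ : ∀ i, τ (x i) = x (b * i)) :
    IsKRational k (fixedField (Subgroup.closure {σ, τ})) := by
  let _ : Algebra (ZMod p) k := ZMod.algebra k p
  let _ : Algebra (ZMod p) K := ((algebraMap k K).comp (algebraMap (ZMod p) k)).toAlgebra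
  have : IsScalarTower (ZMod p) k K := .of_algebraMap_eq fun _ ↦ rfl
  refine isKRational_fixedField_of_le_affineGroup hx hx_top (orderOf_pos b).ne'
    (closure_pair_le_affineGroup hσ hτ) ?_
  rw [ZMod.card]
  exact orderOf_mul_prime_dvd_natCard_closure_pair hx.injective hσ hτ

end PrimeField

/-- Kang–Wang: for `p` an odd prime, `char k = p`, `a` a generator
of `(ℤ/pℤ)ˣ`, and `d` a positive divisor of `p-1` with `p-1 = de`, the fixed
field of `G_{pd} = ⟨σ, τ^e⟩` (where `σ : x_i ↦ x_{i+1}`, `τ : x_i ↦ x_{ai}`)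
acting on `k(x₀,…,x_{p-1})` is purely transcendental over `k`. -/
theorem stmt13 (k : Type*) [Field k] (p : ℕ) [Fact p.Prime] (hodd : Odd p) [CharP k p]
    (a : ℤ) (haU : IsUnit (a : ZMod p))
    (hgen : ∀ u : (ZMod p)ˣ, u ∈ Subgroup.zpowers haU.unit)
    (d e : ℕ) (hd : 0 < d) (hde : d * e = p - 1)
    (x : ZMod p → FractionRing (MvPolynomial (ZMod p) k))
    (hx : ∀ j, x j = algebraMap (MvPolynomial (ZMod p) k)
      (FractionRing (MvPolynomial (ZMod p) k)) (MvPolynomial.X j))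
    (σ τ : FractionRing (MvPolynomial (ZMod p) k) ≃ₐ[k]
           FractionRing (MvPolynomial (ZMod p) k))
    (hσ : ∀ i : ZMod p, σ (x i) = x (i + 1))
    (hτ : ∀ i : ZMod p, τ (x i) = x ((a : ZMod p) * i)) :
    IsKRational k
      (IntermediateField.fixedField (Subgroup.closure {σ, τ ^ e})) := by
  have hind : AlgebraicIndependent k x := funext hx ▸ algebraicIndependent_algebraMap_X k _
  have htop : adjoin k (range x) = ⊤ := funext hx ▸ adjoin_range_algebraMap_X_eq_top k _
  exact stmt13_general hind htop hσ (pow_smul_apply_eq (m := τ) (n := haU.unit) hτ e)
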